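/- For integers x ≥ 2, d ≥ 1, and a natural number m with x^j ≤ m < x^{j+1} for some j < d (so x^j is the largest coin not exceeding m), the minimum coin count satisfies the recursion κ(m) = 1 + κ(m − x^j). -/

import Mathlib

/-- The coin set `{x^0, x^1, …, x^(d-1)}`. -/
def coins (x d : ℕ) : Set ℕ := {c | ∃ i < d, c = x ^ i}

/-- `κ(m)`: the minimum cardinality of a multiset of coins from `coins x d` summing to `m`. -/
noncomputable def kappa (x d m : ℕ) : ℕ :=
  sInf {k | ∃ M : Multiset ℕ, (∀ c ∈ M, c ∈ coins x d) ∧ M.sum = m ∧ M.card = k}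

/-!
Let the coins form a chain under divisibility and let `b` be the largest coin not exceeding `m`.
In an optimal representation of `m` every coin divides `b`. Laying the coins down in decreasing
order, each partial sum is a multiple of the coin about to be added, and so is `b`; hence the
partial sums cannot jump over `b`, and some of the coins add up to exactly `b`. By optimality these
coins cannot be traded for the single coin `b` with a gain, so they already are that single coin.
Thus `b` is used, and removing it leaves an optimal representation of `m - b`.
-/

section DivisibilityChain

variable {S : Set ℕ} {M : Multiset ℕ} {a b : ℕ}

theorem dvd_of_isChain_dvd_of_le (hS : IsChain (· ∣ ·) S) (ha : a ∈ S) (hb : b ∈ S)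
    (hpos : 0 < a) (hab : a ≤ b) : a ∣ b :=
  (hS.total ha hb).elim id fun hba => (hab.antisymm (Nat.le_of_dvd hpos hba)).dvd

theorem exists_mem_forall_dvd_of_isChain_dvd (hchain : IsChain (· ∣ ·) {c | c ∈ M})
    (hpos : ∀ c ∈ M, 0 < c) (hM : M ≠ 0) : ∃ c ∈ M, ∀ a ∈ M, c ∣ a := by
  obtain ⟨c, hc, hmin⟩ :=
    M.toFinset.exists_min_image id (Multiset.toFinset_nonempty.2 hM)
  simp only [Multiset.mem_toFinset, id] at hc hmin
  exact ⟨c, hc, fun a ha => dvd_of_isChain_dvd_of_le hchain hc ha (hpos c hc) (hmin a ha)⟩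

theorem exists_le_sum_eq_of_isChain_dvd (hchain : IsChain (· ∣ ·) {c | c ∈ M})
    (hdvd : ∀ c ∈ M, c ∣ b) (hsum : b ≤ M.sum) : ∃ N ≤ M, N.sum = b := by
  rcases b.eq_zero_or_pos with rfl | hb
  · exact ⟨0, M.zero_le, Multiset.sum_zero⟩
  induction M using Multiset.strongInductionOn with
  | ih M ih =>
    have hM : M ≠ 0 := by
      rintro rfl
      exact hb.not_ge hsum
    obtain ⟨c, hc, hmin⟩ := exists_mem_forall_dvd_of_isChain_dvd hchain
      (fun c hc => Nat.pos_of_dvd_of_pos (hdvd c hc) hb) hM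
    obtain ⟨N, rfl⟩ := Multiset.exists_cons_of_mem hc
    have hmem : ∀ a ∈ N, a ∈ c ::ₘ N := fun a => Multiset.mem_cons_of_mem
    rcases le_or_gt b N.sum with hN | hN
    · obtain ⟨K, hK, hKsum⟩ := ih N (Multiset.lt_cons_self N c)
        (hchain.mono hmem) (fun a ha => hdvd a (hmem a ha)) hN
      exact ⟨K, hK.trans (Multiset.le_cons_self N c), hKsum⟩
    · have hdiff : c ∣ b - N.sum :=
        Nat.dvd_sub (hdvd c hc) (Multiset.dvd_sum fun a ha => hmin a (hmem a ha))
      have hle : c ≤ b - N.sum := Nat.le_of_dvd (Nat.sub_pos_of_lt hN) hdiff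
      rw [Multiset.sum_cons] at hsum
      refine ⟨c ::ₘ N, le_rfl, ?_⟩
      rw [Multiset.sum_cons]
      omega

end DivisibilityChain

/-- The minimum cardinality of a multiset of elements of `S` summing to `m`: the notion `kappa` for
an arbitrary coin set. It takes the junk value `0` when `m` is not a sum of coins, that is, when
`m ∉ AddSubmonoid.closure S`. -/
noncomputable def minCoinCount (S : Set ℕ) (m : ℕ) : ℕ :=
  sInf {k | ∃ M : Multiset ℕ, (∀ c ∈ M, c ∈ S) ∧ M.sum = m ∧ M.card = k}

section MinCoinCount

variable {S : Set ℕ} {M N : Multiset ℕ} {m b : ℕ}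

theorem minCoinCount_sum_le_card (hM : ∀ c ∈ M, c ∈ S) : minCoinCount S M.sum ≤ M.card :=
  Nat.sInf_le ⟨M, hM, rfl, rfl⟩

theorem exists_card_eq_minCoinCount (hm : m ∈ AddSubmonoid.closure S) :
    ∃ M : Multiset ℕ, (∀ c ∈ M, c ∈ S) ∧ M.sum = m ∧ M.card = minCoinCount S m := by
  obtain ⟨M, hM, hsum⟩ := AddSubmonoid.exists_multiset_of_mem_closure hm
  have hne : {k | ∃ M : Multiset ℕ, (∀ c ∈ M, c ∈ S) ∧ M.sum = m ∧ M.card = k}.Nonempty :=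
    ⟨M.card, M, hM, hsum, rfl⟩
  exact Nat.sInf_mem hne

theorem minCoinCount_add_le (hb : b ∈ S) (hm : m ∈ AddSubmonoid.closure S) :
    minCoinCount S (b + m) ≤ 1 + minCoinCount S m := by
  obtain ⟨M, hM, rfl, hcard⟩ := exists_card_eq_minCoinCount hm
  rw [← hcard, ← Multiset.sum_cons, add_comm, ← Multiset.card_cons b M]
  exact minCoinCount_sum_le_card (Multiset.forall_mem_cons.2 ⟨hb, hM⟩)

theorem card_le_one_of_sum_mem (hM : ∀ c ∈ M, c ∈ S) (hopt : M.card = minCoinCount S M.sum)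
    (hNM : N ≤ M) (hN : N.sum ∈ S) : N.card ≤ 1 := by
  obtain ⟨K, rfl⟩ := Multiset.le_iff_exists_add.1 hNM
  have hK : ∀ c ∈ K, c ∈ S := fun c hc => hM c (Multiset.mem_add.2 (Or.inr hc))
  have hexchange : minCoinCount S (N + K).sum ≤ K.card + 1 := by
    rw [Multiset.sum_add, ← Multiset.sum_cons, ← Multiset.card_cons N.sum K]
    exact minCoinCount_sum_le_card (Multiset.forall_mem_cons.2 ⟨hN, hK⟩)
  rw [← hopt, Multiset.card_add] at hexchange
  omega

theorem mem_of_isGreatest_of_card_eq_minCoinCount (hS : IsChain (· ∣ ·) S) (h0 : 0 ∉ S)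
    (hb : IsGreatest {c ∈ S | c ≤ M.sum} b) (hM : ∀ c ∈ M, c ∈ S)
    (hopt : M.card = minCoinCount S M.sum) : b ∈ M := by
  obtain ⟨⟨hbS, hbM⟩, hmax⟩ := hb
  have hdvd : ∀ c ∈ M, c ∣ b := fun c hc => by
    have hcb : c ≤ b := hmax ⟨hM c hc, Multiset.le_sum_of_mem hc⟩
    have hc0 : 0 < c := Nat.pos_of_ne_zero (ne_of_mem_of_not_mem (hM c hc) h0)
    exact dvd_of_isChain_dvd_of_le hS (hM c hc) hbS hc0 hcb
  obtain ⟨N, hNM, rfl⟩ := exists_le_sum_eq_of_isChain_dvd (hS.mono hM) hdvd hbM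
  have hN : N.card ≤ 1 := card_le_one_of_sum_mem hM hopt hNM hbS
  rcases Nat.le_one_iff_eq_zero_or_eq_one.1 hN with hzero | hone
  · obtain rfl := Multiset.card_eq_zero.1 hzero
    exact absurd hbS h0
  · obtain ⟨a, rfl⟩ := Multiset.card_eq_one.1 hone
    rw [Multiset.sum_singleton]
    exact Multiset.singleton_le.1 hNM

theorem kappa_greedy_recursion_general (hS : IsChain (· ∣ ·) S) (h0 : 0 ∉ S)
    (hm : m ∈ AddSubmonoid.closure S) (hb : IsGreatest {c ∈ S | c ≤ m} b) :
    minCoinCount S m = 1 + minCoinCount S (m - b) := by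
  obtain ⟨M, hM, rfl, hopt⟩ := exists_card_eq_minCoinCount hm
  obtain ⟨N, rfl⟩ := Multiset.exists_cons_of_mem
    (mem_of_isGreatest_of_card_eq_minCoinCount hS h0 hb hM hopt)
  obtain ⟨hbS, hN⟩ := Multiset.forall_mem_cons.1 hM
  rw [Multiset.sum_cons, Nat.add_sub_cancel_left]
  apply le_antisymm
  · exact minCoinCount_add_le hbS (AddSubmonoid.multiset_sum_mem _ N fun c hc =>
      AddSubmonoid.subset_closure (hN c hc))
  · rw [← Multiset.sum_cons, ← hopt, Multiset.card_cons, add_comm]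
    exact Nat.succ_le_succ (minCoinCount_sum_le_card hN)

end MinCoinCount

section Coins

variable {x d : ℕ}

theorem isChain_dvd_coins (x d : ℕ) : IsChain (· ∣ ·) (coins x d) := by
  rintro _ ⟨i, -, rfl⟩ _ ⟨j, -, rfl⟩ -
  exact (le_total i j).imp (pow_dvd_pow x) (pow_dvd_pow x)

theorem zero_notMem_coins (hx : 0 < x) : 0 ∉ coins x d := by
  rintro ⟨i, -, hi⟩
  exact (pow_pos hx i).ne hi

theorem mem_closure_coins (hd : 0 < d) (m : ℕ) : m ∈ AddSubmonoid.closure (coins x d) := by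
  have hone : 1 ∈ coins x d := ⟨0, hd, (pow_zero x).symm⟩
  simpa using nsmul_mem (AddSubmonoid.subset_closure hone) m

theorem isGreatest_coins_le {m j : ℕ} (hx : 0 < x) (hj : j < d) (hle : x ^ j ≤ m)
    (hlt : m < x ^ (j + 1)) : IsGreatest {c ∈ coins x d | c ≤ m} (x ^ j) := by
  refine ⟨⟨⟨j, hj, rfl⟩, hle⟩, ?_⟩
  rintro _ ⟨⟨i, -, rfl⟩, him⟩
  have hij : i < j + 1 := lt_of_not_ge fun hji =>
    (him.trans_lt hlt).not_ge (Nat.pow_le_pow_right hx hji)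
  exact Nat.pow_le_pow_right hx (Nat.lt_succ_iff.1 hij)

end Coins

/-- For `x ≥ 2`, `d ≥ 1` and `x^j ≤ m < x^(j+1)` with `j < d` (so `x^j` is the largest
coin not exceeding `m`), the minimum coin count satisfies the greedy recursion
`κ(m) = 1 + κ(m - x^j)`. -/
theorem kappa_greedy_recursion (x d m j : ℕ) (hx : 2 ≤ x) (hd : 1 ≤ d) (hj : j < d)
    (h1 : x ^ j ≤ m) (h2 : m < x ^ (j + 1)) :
    kappa x d m = 1 + kappa x d (m - x ^ j) := by
  have hpos : 0 < x := two_pos.trans_le hx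
  exact kappa_greedy_recursion_general (isChain_dvd_coins x d) (zero_notMem_coins hpos)
    (mem_closure_coins hd m) (isGreatest_coins_le hpos hj h1 h2)
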